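/- For every T ⊆ 𝔹, the image i_T(𝒟_T) ⊆ ℚ^{𝔹−T} equals the ℚ^{≥0}-cone generated by ⋃_𝔭 𝒢^{T-red}(T_𝔭), where 𝒢^{T-red}(T_𝔭) = {h_{σ^{n_β}β}^{β} : β ∈ 𝔹_𝔭 − T̃_𝔭} ∪ {−b_{σ^{n_β}β}^{β} : β ∈ T̃_𝔭 − T_𝔭} if 𝔹_𝔭 − T̃_𝔭 ≠ ∅, and 𝒢^{T-red}(T_𝔭) = {−e_β : β ∈ 𝔹_𝔭 − T_𝔭} if 𝔹_𝔭 = T̃_𝔭 (all these vectors are supported on 𝔹 − T and so lie in ℚ^{𝔹−T}). -/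

import Mathlib

/- Setting: `B` is the finite nonempty set 𝔹 equipped with a permutation `σ` (Frobenius),
and `p` is a prime.  Weights live in `ℚ^𝔹 = (B → ℚ)`.  The orbits `𝔹_𝔭` of `σ` are the sets
`orbit σ β`, and for `T ⊆ 𝔹` we have `T_𝔭 = T ∩ orbit σ β`. -/

open scoped Classical

noncomputable section

namespace GO

variable {B : Type*} [Fintype B] [DecidableEq B]

/-- The standard basis vector `e_β` of `ℚ^𝔹`. -/
def e (β : B) : B → ℚ := fun τ => if τ = β then 1 else 0

/-- `β'` lies in the `σ`-orbit of `β`. -/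
def sameOrbit (σ : Equiv.Perm B) (β β' : B) : Prop := ∃ n : ℕ, (σ ^ n) β = β'

/-- The `σ`-orbit `𝔹_𝔭` of `β`. -/
def orbit (σ : Equiv.Perm B) (β : B) : Set B := {τ | sameOrbit σ β τ}

/-- `|𝔹_𝔭|`, the cardinality of the orbit of `β`. -/
def orbitCard (σ : Equiv.Perm B) (β : B) : ℕ := (orbit σ β).ncard

/-- For `β`, `β'` in the same orbit: the unique `n` with `0 < n ≤ |𝔹_𝔭|` and `σ^n β' = β`,
realized as the least positive `n` with `σ^n β' = β`. -/
def steps (σ : Equiv.Perm B) (β' β : B) : ℕ := sInf {n : ℕ | 0 < n ∧ (σ ^ n) β' = β}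

/-- For `β`, `β'` in the same orbit: the unique `n` with `0 ≤ n < |𝔹_𝔭|` and `σ^n β = β'`. -/
def steps0 (σ : Equiv.Perm B) (β β' : B) : ℕ := sInf {n : ℕ | (σ ^ n) β = β'}

/-- `h_β^{β'} = -e_β + p^n e_{β'}` where `β = σ^n β'` with `0 < n ≤ |𝔹_𝔭|`. -/
def hvec (σ : Equiv.Perm B) (p : ℕ) (β β' : B) : B → ℚ :=
  -(e β) + ((p : ℚ) ^ steps σ β' β) • e β'

/-- `b_β^{β'} = e_β + p^n e_{β'}` where `β = σ^n β'` with `0 < n ≤ |𝔹_𝔭|`. -/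
def bvec (σ : Equiv.Perm B) (p : ℕ) (β β' : B) : B → ℚ :=
  (e β) + ((p : ℚ) ^ steps σ β' β) • e β'

/-- `h_β = -e_β + p e_{σ⁻¹ β}`. -/
def hsimple (σ : Equiv.Perm B) (p : ℕ) (β : B) : B → ℚ := -(e β) + (p : ℚ) • e (σ⁻¹ β)

/-- `b_β = e_β + p e_{σ⁻¹ β}`. -/
def bsimple (σ : Equiv.Perm B) (p : ℕ) (β : B) : B → ℚ := (e β) + (p : ℚ) • e (σ⁻¹ β)

/-- The `ℚ^{≥0}`-cone generated by a set `S` of vectors: all finite nonnegative rational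
linear combinations of elements of `S`. -/
def cone {V : Type*} [AddCommMonoid V] [Module ℚ V] (S : Set V) : Set V :=
  {x | ∃ (n : ℕ) (c : Fin n → ℚ) (v : Fin n → V),
    (∀ i, 0 ≤ c i) ∧ (∀ i, v i ∈ S) ∧ x = ∑ i, c i • v i}

/-- A chain in `T` (automatically contained in a single orbit, so this is the notion of a
chain in `T_𝔭` for `T_𝔭 ⊊ 𝔹_𝔭`): `C = {σ^{-i}β : 0 ≤ i ≤ m} ⊆ T` with `σβ ∉ T` and
`σ^{-m-1}β ∉ T`. -/
def IsChainIn (σ : Equiv.Perm B) (T : Set B) (C : Set B) : Prop :=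
  ∃ (β : B) (m : ℕ), σ β ∉ T ∧ (σ⁻¹ ^ (m + 1)) β ∉ T ∧
    (∀ i ≤ m, (σ⁻¹ ^ i) β ∈ T) ∧ C = {τ | ∃ i ≤ m, τ = (σ⁻¹ ^ i) β}

/-- `C̃` for a chain `C`: equals `C` if `m` is odd (i.e. `|C| = m+1` is even), and
`C ∪ {σ^{-m-1}β} = C ∪ σ⁻¹(C)` if `m` is even (i.e. `|C|` odd). -/
def chainExt (σ : Equiv.Perm B) (C : Set B) : Set B :=
  if Odd C.ncard then C ∪ (⇑σ⁻¹ '' C) else C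

/-- `T̃ = ⋃_𝔭 T̃_𝔭`: the union of `T` with the extensions `C̃` of all chains `C` in `T`.
(For orbits with `T_𝔭 = 𝔹_𝔭` there are no chains and `T̃_𝔭 = 𝔹_𝔭 = T_𝔭`.) -/
def tilde (σ : Equiv.Perm B) (T : Set B) : Set B :=
  T ∪ ⋃ (C : Set B) (_ : IsChainIn σ T C), chainExt σ C

/-- `μ_β`: the least `i > 0` with `σ^i β ∉ T` if `T_𝔭 ≠ 𝔹_𝔭`, and `0` if `T_𝔭 = 𝔹_𝔭`. -/
def mu (σ : Equiv.Perm B) (T : Set B) (β : B) : ℕ :=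
  if orbit σ β ⊆ T then 0 else sInf {i : ℕ | 0 < i ∧ (σ ^ i) β ∉ T}

/-- `n_β`: the least `i > 0` with `σ^i β ∉ T̃` (meaningful when `T̃_𝔭 ≠ 𝔹_𝔭`). -/
def nn (σ : Equiv.Perm B) (T : Set B) (β : B) : ℕ :=
  sInf {i : ℕ | 0 < i ∧ (σ ^ i) β ∉ tilde σ T}

/-- `ν_β`: the least `i ≥ 0` with `σ^{-i} β ∉ T` (meaningful when `T_𝔭 ≠ 𝔹_𝔭`). -/
def nu (σ : Equiv.Perm B) (T : Set B) (β : B) : ℕ :=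
  sInf {i : ℕ | (σ⁻¹ ^ i) β ∉ T}

/-- `𝒯(T_𝔭) = (𝔹_𝔭 − T̃_𝔭) ∪ σ(T̃_𝔭 − T_𝔭)`, taken globally (union over all `𝔭`). -/
def Tscr (σ : Equiv.Perm B) (T : Set B) : Set B :=
  (tilde σ T)ᶜ ∪ (⇑σ '' (tilde σ T \ T))

/-- The generating set `⋃_𝔭 𝒢(T_𝔭)`:
`{h_β^{β'} : β ∈ ℋ(T_𝔭), β' ∈ 𝒯(T_𝔭)} ∪ {±b_β : β ∈ T_𝔭}` over all `𝔭`. -/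
def Dgen (σ : Equiv.Perm B) (p : ℕ) (T : Set B) : Set (B → ℚ) :=
  {v | ∃ β β', β ∉ T ∧ β' ∈ Tscr σ T ∧ sameOrbit σ β β' ∧ v = hvec σ p β β'}
  ∪ {v | ∃ β ∈ T, v = bsimple σ p β ∨ v = -(bsimple σ p β)}

/-- The cone `𝒟_T`. -/
def D (σ : Equiv.Perm B) (p : ℕ) (T : Set B) : Set (B → ℚ) := cone (Dgen σ p T)

/-- `h_{σ^{n_β}β}^{β} = -e_{σ^{n_β}β} + p^{n_β} e_β`. -/
def fH (σ : Equiv.Perm B) (p : ℕ) (T : Set B) (β : B) : B → ℚ :=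
  -(e ((σ ^ nn σ T β) β)) + ((p : ℚ) ^ nn σ T β) • e β

/-- `b_{σ^{n_β}β}^{β} = e_{σ^{n_β}β} + p^{n_β} e_β`. -/
def fB (σ : Equiv.Perm B) (p : ℕ) (T : Set B) (β : B) : B → ℚ :=
  (e ((σ ^ nn σ T β) β)) + ((p : ℚ) ^ nn σ T β) • e β

/-- The generating set `⋃_𝔭 𝒢′(T_𝔭)`:
if `𝔹_𝔭 − T̃_𝔭 ≠ ∅` it is `{h_{σ^{n_β}β}^β : β ∈ 𝔹_𝔭 − T̃_𝔭} ∪ {−b_{σ^{n_β}β}^β : β ∈ T̃_𝔭 − T_𝔭}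
∪ {±b_β : β ∈ T_𝔭}`, and if `𝔹_𝔭 = T̃_𝔭` it is `{−e_β : β ∈ 𝔹_𝔭 − T_𝔭} ∪ {±b_β : β ∈ T_𝔭}`. -/
def D'gen (σ : Equiv.Perm B) (p : ℕ) (T : Set B) : Set (B → ℚ) :=
  {v | ∃ β, β ∉ tilde σ T ∧ v = fH σ p T β}
  ∪ {v | ∃ β, β ∈ tilde σ T ∧ β ∉ T ∧ ¬ orbit σ β ⊆ tilde σ T ∧ v = -(fB σ p T β)}
  ∪ {v | ∃ β, β ∉ T ∧ orbit σ β ⊆ tilde σ T ∧ v = -(e β)}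
  ∪ {v | ∃ β ∈ T, v = bsimple σ p β ∨ v = -(bsimple σ p β)}

/-- The cone `𝒟′_T`. -/
def D' (σ : Equiv.Perm B) (p : ℕ) (T : Set B) : Set (B → ℚ) := cone (D'gen σ p T)

/-- `f_β(T)` for `β ∉ T`: `h_{σ^{n_β}β}^β` if `β ∈ 𝔹_𝔭 − T̃_𝔭`; `−b_{σ^{n_β}β}^β` if
`β ∈ T̃_𝔭 − T_𝔭` and `𝔹_𝔭 ≠ T̃_𝔭`; and `−(1+p^{|𝔹_𝔭|}) e_β` if `𝔹_𝔭 = T̃_𝔭`. -/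
def fvec (σ : Equiv.Perm B) (p : ℕ) (T : Set B) (β : B) : B → ℚ :=
  if orbit σ β ⊆ tilde σ T then -((1 + (p : ℚ) ^ orbitCard σ β) • e β)
  else if β ∈ tilde σ T then -(fB σ p T β) else fH σ p T β

/-- `𝔹(T) = ⋃_𝔭 𝔹_𝔭(T)`: `β ∈ 𝔹(T)` iff `β ∉ T`, the set `𝔹_𝔭 − T̃_𝔭` is nonempty, and
`𝔹_𝔭 − T̃_𝔭 ≠ {β}` (this encodes all three cases of the definition of `𝔹_𝔭(T)`). -/
def BT (σ : Equiv.Perm B) (T : Set B) : Set B :=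
  {β | β ∉ T ∧ (orbit σ β \ tilde σ T).Nonempty ∧ orbit σ β \ tilde σ T ≠ {β}}

/-- The sign function `ε_T : 𝔹 → {−1,0,1}`. -/
def epsT (σ : Equiv.Perm B) (T : Set B) (β : B) : ℚ :=
  if orbit σ β ⊆ T then 0
  else if β ∈ tilde σ T then (-1 : ℚ) ^ (mu σ T β - 1) else 1

/-- `L^ε[β, β'](κ) = Σ_{0 ≤ i ≤ n} ε(σ^iβ) p^i k_{σ^iβ}`, where `β' = σ^n β` with
`0 ≤ n < |𝔹_𝔭|`. -/
def Lfun (σ : Equiv.Perm B) (p : ℕ) (ε : B → ℚ) (β β' : B) (κ : B → ℚ) : ℚ :=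
  ∑ i ∈ Finset.range (steps0 σ β β' + 1), ε ((σ ^ i) β) * (p : ℚ) ^ i * κ ((σ ^ i) β)

/-- `L^ε[β] = L^ε[β, σ⁻¹β]`. -/
def Lfun1 (σ : Equiv.Perm B) (p : ℕ) (ε : B → ℚ) (β : B) (κ : B → ℚ) : ℚ :=
  Lfun σ p ε β (σ⁻¹ β) κ

/-- `L_{T,β}` for `β ∈ 𝔹 − T`: `L^{ε_T}[σ^{μ_β}β]` if `β ∈ 𝔹 − T̃`, and
`L^{ε_T}[β, σ^{μ_β−1}β]` if `β ∈ T̃ − T`. -/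
def LT (σ : Equiv.Perm B) (p : ℕ) (T : Set B) (β : B) (κ : B → ℚ) : ℚ :=
  if β ∈ tilde σ T then Lfun σ p (epsT σ T) β ((σ ^ (mu σ T β - 1)) β) κ
  else Lfun1 σ p (epsT σ T) ((σ ^ mu σ T β) β) κ

/-- `ε_{T,f_β}`: negates `ε_T` on `{β, σβ, …, σ^{μ_β−1}β}`. -/
def epsTf (σ : Equiv.Perm B) (T : Set B) (β τ : B) : ℚ :=
  if ∃ i < mu σ T β, τ = (σ ^ i) β then -(epsT σ T τ) else epsT σ T τ

/-- `L_{T,f_β,τ}` for `β ∈ 𝔹(T)` and `τ ∈ 𝔹 − (T ∪ {σ^{n_β}β})`, with `β′ = σ^{n_β}β` and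
`β̃ = σ^{μ_{β′}}β′`. -/
def LTf (σ : Equiv.Perm B) (p : ℕ) (T : Set B) (β τ : B) (κ : B → ℚ) : ℚ :=
  if τ = β then
    (if β ∈ tilde σ T then
      Lfun1 σ p (epsTf σ T β) ((σ ^ mu σ T ((σ ^ nn σ T β) β)) ((σ ^ nn σ T β) β)) κ
    else
      Lfun σ p (epsTf σ T β) β (σ⁻¹ ((σ ^ mu σ T ((σ ^ nn σ T β) β)) ((σ ^ nn σ T β) β))) κ)
  else
    (if τ ∈ tilde σ T then LT σ p T τ κ
     else Lfun1 σ p (epsTf σ T β) ((σ ^ mu σ T τ) τ) κ)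

/-- `𝒟_{T,f_β} = {κ : L_{T,f_β,τ}(κ) ≥ 0 for all τ ∈ 𝔹 − (T ∪ {σ^{n_β}β})}`. -/
def Df (σ : Equiv.Perm B) (p : ℕ) (T : Set B) (β : B) : Set (B → ℚ) :=
  {κ | ∀ τ, τ ∉ T → τ ≠ (σ ^ nn σ T β) β → 0 ≤ LTf σ p T β τ κ}

/-- `i_T : ℚ^𝔹 → ℚ^{𝔹−T}`, the linear map with `i_T(e_β) = 0` if `T_𝔭 = 𝔹_𝔭` and
`i_T(e_β) = (−p)^{ν_β} e_{σ^{−ν_β}β}` otherwise. -/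
def iT (σ : Equiv.Perm B) (p : ℕ) (T : Set B) (κ : B → ℚ) : {β : B // β ∉ T} → ℚ :=
  fun β₀ => ∑ β : B, κ β *
    (if orbit σ β ⊆ T then 0
     else if (σ⁻¹ ^ nu σ T β) β = β₀.1 then (-(p : ℚ)) ^ nu σ T β else 0)

/-- Restriction to `ℚ^{𝔹−T}` of a vector of `ℚ^𝔹` (used for vectors supported on `𝔹 − T`). -/
def res (T : Set B) (v : B → ℚ) : {β : B // β ∉ T} → ℚ := fun β => v β.1

/-- The generating set `𝒢^{T-red}(T) = ⋃_𝔭 𝒢_𝔭^{T-red}(T)` of the reduced cone. -/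
def Gred (σ : Equiv.Perm B) (p : ℕ) (T : Set B) : Set ({β : B // β ∉ T} → ℚ) :=
  {v | ∃ β, β ∉ tilde σ T ∧ v = res T (fH σ p T β)}
  ∪ {v | ∃ β, β ∈ tilde σ T ∧ β ∉ T ∧ ¬ orbit σ β ⊆ tilde σ T ∧ v = res T (-(fB σ p T β))}
  ∪ {v | ∃ β, β ∉ T ∧ orbit σ β ⊆ tilde σ T ∧ v = res T (-(e β))}

/-- The minimal cone `𝒞^min_T = i_T(𝒟_T ∩ ⋂_{β ∈ 𝔹(T)} 𝒟_{T,f_β}) ⊆ ℚ^{𝔹−T}`. -/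
def Cmin (σ : Equiv.Perm B) (p : ℕ) (T : Set B) : Set ({β : B // β ∉ T} → ℚ) :=
  iT σ p T '' (D σ p T ∩ {κ | ∀ β ∈ BT σ T, κ ∈ Df σ p T β})

/-- `g_β`: `b_β` if `β ∈ T_𝔭`; `−e_β` if `β ∈ T̃_𝔭 − T_𝔭` and `𝔹_𝔭 = T̃_𝔭`;
`−b_{σ^{n_β}β}^β` if `β ∈ T̃_𝔭 − T_𝔭` and `𝔹_𝔭 ≠ T̃_𝔭`; `h_{σ^{n_β}β}^β` if `β ∈ 𝔹_𝔭 − T̃_𝔭`. -/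
def gvec (σ : Equiv.Perm B) (p : ℕ) (T : Set B) (β : B) : B → ℚ :=
  if β ∈ T then bsimple σ p β
  else if orbit σ β ⊆ tilde σ T then -(e β)
  else if β ∈ tilde σ T then -(fB σ p T β)
  else fH σ p T β

/-- The map `σ̄ : β ↦ σ^{n_β} β`. -/
def sigbar (σ : Equiv.Perm B) (T : Set B) (β : B) : B := (σ ^ nn σ T β) β

/-- `h_β = -e_β + p e_{σ⁻¹β}` as an element of `ℤ^𝔹`. -/
def hZ (σ : Equiv.Perm B) (p : ℕ) (β : B) : B → ℤ :=
  fun τ => (if τ = β then -1 else 0) + (if τ = σ⁻¹ β then (p : ℤ) else 0)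

end GO

end

namespace GO

section coneLemmas
variable {V : Type*} [AddCommMonoid V] [Module ℚ V]

theorem subset_cone' {S : Set V} {v : V} (h : v ∈ S) : v ∈ cone S :=
  ⟨1, fun _ => 1, fun _ => v, fun _ => zero_le_one, fun _ => h, by simp⟩

theorem cone_zero' {S : Set V} : (0 : V) ∈ cone S :=
  ⟨0, fun _ => 0, fun _ => 0, fun i => i.elim0, fun i => i.elim0, by simp⟩

theorem cone_add' {S : Set V} {x y : V} (hx : x ∈ cone S) (hy : y ∈ cone S) : x + y ∈ cone S := by
  obtain ⟨n, c, v, hc, hv, rfl⟩ := hx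
  obtain ⟨m, d, w, hd, hw, rfl⟩ := hy
  refine ⟨n + m, Fin.append c d, Fin.append v w, ?_, ?_, ?_⟩
  · intro i
    refine Fin.addCases (fun j => ?_) (fun j => ?_) i
    · simpa using hc j
    · simpa using hd j
  · intro i
    refine Fin.addCases (fun j => ?_) (fun j => ?_) i
    · simpa using hv j
    · simpa using hw j
  · simp [Fin.sum_univ_add]

theorem cone_smul' {S : Set V} {x : V} {a : ℚ} (ha : 0 ≤ a) (hx : x ∈ cone S) :
    a • x ∈ cone S := by
  obtain ⟨n, c, v, hc, hv, rfl⟩ := hx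
  exact ⟨n, fun i => a * c i, v, fun i => mul_nonneg ha (hc i), hv, by
    simp [Finset.smul_sum, mul_smul]⟩

theorem cone_le' {S K : Set V} (h0 : (0 : V) ∈ K) (hadd : ∀ x ∈ K, ∀ y ∈ K, x + y ∈ K)
    (hsmul : ∀ a : ℚ, 0 ≤ a → ∀ x ∈ K, a • x ∈ K) (hS : S ⊆ K) : cone S ⊆ K := by
  rintro x ⟨n, c, v, hc, hv, rfl⟩
  exact Finset.sum_induction _ (· ∈ K) (fun a b ha hb => hadd a ha b hb) h0
    (fun i _ => hsmul _ (hc i) _ (hS (hv i)))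

end coneLemmas

section main
variable {B : Type*} [Fintype B] [DecidableEq B] (σ : Equiv.Perm B) (p : ℕ) (T : Set B)

theorem iT_add' (x y : B → ℚ) : iT σ p T (x + y) = iT σ p T x + iT σ p T y := by
  funext b
  simp only [iT, Pi.add_apply, add_mul, Finset.sum_add_distrib]

theorem iT_smul' (a : ℚ) (x : B → ℚ) : iT σ p T (a • x) = a • iT σ p T x := by
  funext b
  simp only [iT, Pi.smul_apply, smul_eq_mul, Finset.mul_sum, mul_assoc]

theorem iT_neg' (x : B → ℚ) : iT σ p T (-x) = - iT σ p T x := by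
  have := iT_smul' σ p T (-1) x
  simpa using this

theorem iT_e' (β : B) : iT σ p T (e β) = fun β₀ =>
    (if orbit σ β ⊆ T then 0
     else if (σ⁻¹ ^ nu σ T β) β = β₀.1 then (-(p : ℚ)) ^ nu σ T β else 0) := by
  funext b
  simp only [iT]
  rw [Finset.sum_eq_single β]
  · simp [e]
  · intro c _ hc
    simp [e, hc]
  · simp

theorem mem_orbit_self' (β : B) : β ∈ orbit σ β := ⟨0, rfl⟩

theorem pow_ord' (β : B) : (σ ^ orderOf σ) β = β := by simp [pow_orderOf_eq_one]

theorem sameOrbit_symm' {β β' : B} (h : sameOrbit σ β β') :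
    ∃ n : ℕ, 0 < n ∧ (σ ^ n) β' = β := by
  obtain ⟨n, rfl⟩ := h
  have hN := orderOf_pos σ
  refine ⟨orderOf σ * (n + 1) - n, ?_, ?_⟩
  · have : n + 1 ≤ orderOf σ * (n + 1) := Nat.le_mul_of_pos_left _ hN
    omega
  · rw [← Equiv.Perm.mul_apply, ← pow_add, Nat.sub_add_cancel, pow_mul, pow_orderOf_eq_one]
    · simp
    · have : n + 1 ≤ orderOf σ * (n + 1) := Nat.le_mul_of_pos_left _ hN
      omega

theorem orbit_inv' (β : B) : orbit σ (σ⁻¹ β) = orbit σ β := by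
  ext τ
  constructor
  · rintro ⟨n, rfl⟩
    obtain ⟨m, -, hm⟩ := sameOrbit_symm' σ (β := σ⁻¹ β) (β' := β) ⟨1, by simp⟩
    exact ⟨n + m, by rw [pow_add, Equiv.Perm.mul_apply, hm]⟩
  · rintro ⟨n, rfl⟩
    exact ⟨n + 1, by rw [pow_add, Equiv.Perm.mul_apply]; simp⟩

theorem iT_e_notMem' {β : B} (h : β ∉ T) : iT σ p T (e β) = res T (e β) := by
  have h1 : ¬ orbit σ β ⊆ T := fun hh => h (hh (mem_orbit_self' σ β))
  have h2 : nu σ T β = 0 := Nat.sInf_eq_zero.2 (Or.inl (show (σ⁻¹ ^ 0) β ∉ T from h))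
  rw [iT_e']
  funext b
  simp [h1, h2, res, e, eq_comm]

theorem iT_e_mem' {β : B} (h : β ∈ T) :
    iT σ p T (e β) = (-(p : ℚ)) • iT σ p T (e (σ⁻¹ β)) := by
  rw [iT_e', iT_e', orbit_inv']
  funext b
  by_cases h1 : orbit σ β ⊆ T
  · simp [h1]
  · have h2 : nu σ T β = nu σ T (σ⁻¹ β) + 1 := by
      have hne : {i : ℕ | (σ⁻¹ ^ i) β ∉ T}.Nonempty := by
        obtain ⟨τ, ⟨n, hn⟩, hτ⟩ := Set.not_subset.1 h1
        obtain ⟨m, -, hm⟩ := sameOrbit_symm' σ ⟨n, hn⟩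
        refine ⟨m, ?_⟩
        have : (σ⁻¹ ^ m) β = τ := by
          rw [← hm, ← Equiv.Perm.mul_apply]; simp
        change (σ⁻¹ ^ m) β ∉ T
        rwa [this]
      have h0 : 0 < nu σ T β := by
        rcases Nat.eq_zero_or_pos (nu σ T β) with h0 | h0
        · exfalso
          have := Nat.sInf_mem hne
          change (σ⁻¹ ^ (nu σ T β)) β ∉ T at this
          rw [h0] at this
          exact this (by simpa using h)
        · exact h0
      have key := Nat.sInf_add (n := 1) (p := fun i => (σ⁻¹ ^ i) β ∉ T) h0
      have hset : nu σ T (σ⁻¹ β) = sInf {m | (σ⁻¹ ^ (m + 1)) β ∉ T} := by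
        simp only [nu, pow_succ, Equiv.Perm.mul_apply]
      rw [hset]
      exact key.symm
    simp only [h1, if_false, h2, Pi.smul_apply, smul_eq_mul, pow_succ, Equiv.Perm.mul_apply]
    split_ifs <;> ring

theorem iT_b' {β : B} (h : β ∈ T) : iT σ p T (bsimple σ p β) = 0 := by
  rw [bsimple, iT_add', iT_smul', iT_e_mem' σ p T h, neg_smul, neg_add_cancel]

theorem tilde_succ' {γ : B} (h : γ ∈ tilde σ T) (h' : γ ∉ T) : σ γ ∈ T := by
  rcases h with h | h
  · exact absurd h h'
  · simp only [Set.mem_iUnion] at h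
    obtain ⟨C, ⟨β, m, -, -, hC, rfl⟩, hγ⟩ := h
    have hCT : ∀ τ, τ ∈ {τ | ∃ i ≤ m, τ = (σ⁻¹ ^ i) β} → τ ∈ T := by
      rintro τ ⟨i, hi, rfl⟩
      exact hC i hi
    unfold chainExt at hγ
    split_ifs at hγ
    · rcases hγ with hγ | ⟨τ, hτ, rfl⟩
      · exact absurd (hCT _ hγ) h'
      · simpa using hCT _ hτ
    · exact absurd (hCT _ hγ) h'

theorem notMem_of_tilde' {β : B} (h : β ∉ tilde σ T) : β ∉ T := fun hh => h (Or.inl hh)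

theorem iT_succ' {γ : B} (h : γ ∈ tilde σ T) (h' : γ ∉ T) :
    iT σ p T (e (σ γ)) = (-(p : ℚ)) • iT σ p T (e γ) := by
  have := iT_e_mem' σ p T (tilde_succ' σ T h h')
  simpa using this

theorem iT_hvec' (β β' : B) : iT σ p T (hvec σ p β β') =
    - iT σ p T (e β) + ((p : ℚ) ^ steps σ β' β) • iT σ p T (e β') := by
  rw [hvec, iT_add', iT_neg', iT_smul']

theorem steps_spec' {β β' : B} (h : sameOrbit σ β β') :
    0 < steps σ β' β ∧ (σ ^ steps σ β' β) β' = β :=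
  Nat.sInf_mem (s := {n : ℕ | 0 < n ∧ (σ ^ n) β' = β}) (sameOrbit_symm' σ h)

theorem steps_eq' {β β' : B} {n : ℕ} (hn : 0 < n) (h : (σ ^ n) β' = β)
    (hmin : ∀ k, 0 < k → k < n → (σ ^ k) β' ≠ β) : steps σ β' β = n := by
  have hmem : n ∈ {n : ℕ | 0 < n ∧ (σ ^ n) β' = β} := ⟨hn, h⟩
  have h1 : steps σ β' β ≤ n := Nat.sInf_le hmem
  have h2 : 0 < steps σ β' β ∧ (σ ^ steps σ β' β) β' = β := Nat.sInf_mem ⟨n, hmem⟩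
  by_contra h3
  exact hmin _ h2.1 (by omega) h2.2

theorem nn_spec' {β : B} (h : ¬ orbit σ β ⊆ tilde σ T) :
    0 < nn σ T β ∧ (σ ^ nn σ T β) β ∉ tilde σ T := by
  refine Nat.sInf_mem (s := {i : ℕ | 0 < i ∧ (σ ^ i) β ∉ tilde σ T}) ?_
  obtain ⟨τ, ⟨n, rfl⟩, hτ⟩ := Set.not_subset.1 h
  refine ⟨n + orderOf σ, ?_, ?_⟩
  · have := orderOf_pos σ
    omega
  · rwa [pow_add, Equiv.Perm.mul_apply, pow_ord']

theorem nn_min' {β : B} {k : ℕ} (hk : 0 < k) (h : k < nn σ T β) : (σ ^ k) β ∈ tilde σ T := by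
  by_contra h'
  exact Nat.notMem_of_lt_sInf h ⟨hk, h'⟩

theorem nn_le' {β : B} {k : ℕ} (hk : 0 < k) (h : (σ ^ k) β ∉ tilde σ T) : nn σ T β ≤ k :=
  Nat.sInf_le ⟨hk, h⟩

theorem not_sub' {β : B} (n : ℕ) (h : (σ ^ n) β ∉ tilde σ T) : ¬ orbit σ β ⊆ tilde σ T :=
  fun hh => h (hh ⟨n, rfl⟩)

theorem sameOrbit_pow' (β : B) (n : ℕ) : sameOrbit σ ((σ ^ n) β) β := by
  obtain ⟨m, -, hm⟩ := sameOrbit_symm' σ (β := β) ⟨n, rfl⟩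
  exact ⟨m, hm⟩

theorem res_fH' {β : B} (h : β ∉ tilde σ T) : res T (fH σ p T β) =
    - iT σ p T (e ((σ ^ nn σ T β) β)) + ((p : ℚ) ^ nn σ T β) • iT σ p T (e β) := by
  rw [iT_e_notMem' σ p T (notMem_of_tilde' σ T h),
    iT_e_notMem' σ p T (notMem_of_tilde' σ T (nn_spec' σ T (not_sub' σ T 0 h)).2)]
  rfl

theorem res_fB' {β : B} (h : β ∉ T) (h' : ¬ orbit σ β ⊆ tilde σ T) :
    res T (-(fB σ p T β)) =
    - iT σ p T (e ((σ ^ nn σ T β) β)) - ((p : ℚ) ^ nn σ T β) • iT σ p T (e β) := by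
  rw [iT_e_notMem' σ p T h,
    iT_e_notMem' σ p T (notMem_of_tilde' σ T (nn_spec' σ T h').2)]
  funext b
  simp [res, fB]
  ring

theorem fact1 (n : ℕ) : ∀ β : B, β ∉ tilde σ T → (σ ^ n) β ∉ tilde σ T →
    - iT σ p T (e ((σ ^ n) β)) + ((p : ℚ) ^ n) • iT σ p T (e β) ∈ cone (Gred σ p T) := by
  induction n using Nat.strong_induction_on with
  | _ n ih =>
    intro β h1 h2
    rcases Nat.eq_zero_or_pos n with rfl | hn
    · simpa using cone_zero'
    · have hs := nn_spec' σ T (not_sub' σ T 0 h1)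
      have hle := nn_le' σ T hn h2
      have hg : res T (fH σ p T β) ∈ cone (Gred σ p T) :=
        subset_cone' (Or.inl (Or.inl ⟨β, h1, rfl⟩))
      rw [res_fH' σ p T h1] at hg
      obtain ⟨m, rfl⟩ := Nat.exists_eq_add_of_le' hle
      have hm := ih m (by omega) ((σ ^ nn σ T β) β) hs.2
        (by rwa [pow_add, Equiv.Perm.mul_apply] at h2)
      rw [pow_add, Equiv.Perm.mul_apply]
      have := cone_add' hm (cone_smul' (a := (p : ℚ) ^ m) (by positivity) hg)
      convert this using 1
      rw [pow_add]
      module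

theorem fact2 (hp : p.Prime) {β : B} (h : β ∉ tilde σ T) :
    iT σ p T (e β) ∈ cone (Gred σ p T) := by
  have h1 := fact1 σ p T (orderOf σ) β h (by rwa [pow_ord'])
  rw [pow_ord'] at h1
  have hp1 : (1 : ℚ) < p := by exact_mod_cast hp.one_lt
  have h2 : (1 : ℚ) < (p : ℚ) ^ orderOf σ := one_lt_pow₀ hp1 (orderOf_pos σ).ne'
  have h3 : ((p : ℚ) ^ orderOf σ - 1) ≠ 0 := by linarith
  have h4 := cone_smul' (a := ((p : ℚ) ^ orderOf σ - 1)⁻¹) (inv_nonneg.2 (by linarith)) h1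
  convert h4 using 1
  have : - iT σ p T (e β) + ((p : ℚ) ^ orderOf σ) • iT σ p T (e β)
    = ((p : ℚ) ^ orderOf σ - 1) • iT σ p T (e β) := by module
  rw [this, smul_smul, inv_mul_cancel₀ h3, one_smul]

theorem fact3 (hp : p.Prime) {β : B} (h : β ∈ tilde σ T) (h' : β ∉ T) :
    - iT σ p T (e β) ∈ cone (Gred σ p T) := by
  by_cases ho : orbit σ β ⊆ tilde σ T
  · refine subset_cone' (Or.inr ⟨β, h', ho, ?_⟩)
    rw [iT_e_notMem' σ p T h']
    rfl
  · have hg : res T (-(fB σ p T β)) ∈ cone (Gred σ p T) :=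
      subset_cone' (Or.inl (Or.inr ⟨β, h, h', ho, rfl⟩))
    rw [res_fB' σ p T h' ho] at hg
    have h2 := fact2 σ p T hp (nn_spec' σ T ho).2
    have h3 := cone_add' hg h2
    have hp0 : (p : ℚ) ^ nn σ T β ≠ 0 := pow_ne_zero _ (by exact_mod_cast hp.ne_zero)
    have h4 := cone_smul' (a := ((p : ℚ) ^ nn σ T β)⁻¹) (by positivity) h3
    convert h4 using 1
    have : - iT σ p T (e ((σ ^ nn σ T β) β)) - ((p : ℚ) ^ nn σ T β) • iT σ p T (e β)
      + iT σ p T (e ((σ ^ nn σ T β) β)) = ((p : ℚ) ^ nn σ T β) • (- iT σ p T (e β)) := by module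
    rw [this, smul_smul, inv_mul_cancel₀ hp0, one_smul]

theorem fact4 (n : ℕ) (hn : 0 < n) {γ : B} (h : γ ∈ tilde σ T) (h' : γ ∉ T)
    (h2 : (σ ^ n) γ ∉ tilde σ T) :
    - iT σ p T (e ((σ ^ n) γ)) - ((p : ℚ) ^ n) • iT σ p T (e γ) ∈ cone (Gred σ p T) := by
  have ho := not_sub' σ T n h2
  have hs := nn_spec' σ T ho
  have hg : res T (-(fB σ p T γ)) ∈ cone (Gred σ p T) :=
    subset_cone' (Or.inl (Or.inr ⟨γ, h, h', ho, rfl⟩))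
  rw [res_fB' σ p T h' ho] at hg
  obtain ⟨m, rfl⟩ := Nat.exists_eq_add_of_le' (nn_le' σ T hn h2)
  have hm := fact1 σ p T m ((σ ^ nn σ T γ) γ) hs.2
    (by rwa [pow_add, Equiv.Perm.mul_apply] at h2)
  rw [pow_add, Equiv.Perm.mul_apply]
  have := cone_add' hm (cone_smul' (a := (p : ℚ) ^ m) (by positivity) hg)
  convert this using 1
  rw [pow_add]
  module

theorem gen_fwd (hp : p.Prime) {v : B → ℚ} (hv : v ∈ Dgen σ p T) :
    iT σ p T v ∈ cone (Gred σ p T) := by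
  rcases hv with ⟨β, β', hβ, hβ', ho, rfl⟩ | ⟨β, hβ, rfl | rfl⟩
  · obtain ⟨hs0, hs⟩ := steps_spec' σ ho
    rw [iT_hvec']
    generalize steps σ β' β = s at *
    rcases hβ' with hβ' | ⟨γ, ⟨hγ, hγ'⟩, rfl⟩
    · by_cases hb : β ∈ tilde σ T
      · exact cone_add' (fact3 σ p T hp hb hβ)
          (cone_smul' (by positivity) (fact2 σ p T hp hβ'))
      · subst hs
        exact fact1 σ p T s β' hβ' hb
    · rw [iT_succ' σ p T hγ hγ']
      have hs' : (σ ^ (s + 1)) γ = β := by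
        rw [pow_succ, Equiv.Perm.mul_apply, hs]
      by_cases hb : β ∈ tilde σ T
      · have := cone_add' (fact3 σ p T hp hb hβ)
          (cone_smul' (a := (p : ℚ) ^ (s + 1)) (by positivity) (fact3 σ p T hp hγ hγ'))
        convert this using 1
        rw [pow_succ]
        module
      · have := fact4 σ p T (s + 1) (by omega) hγ hγ' (by rwa [hs'])
        rw [hs'] at this
        convert this using 1
        rw [pow_succ]
        module
  · rw [iT_b' σ p T hβ]
    exact cone_zero'
  · rw [iT_neg', iT_b' σ p T hβ, neg_zero]
    exact cone_zero'

theorem gen_bwd (hp : p.Prime) {g : {β : B // β ∉ T} → ℚ} (hg : g ∈ Gred σ p T) :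
    g ∈ iT σ p T '' D σ p T := by
  rcases hg with (⟨β, hβ, rfl⟩ | ⟨β, hβ, hβ', ho, rfl⟩) | ⟨β, hβ', ho, rfl⟩
  · have hs := nn_spec' σ T (not_sub' σ T 0 hβ)
    refine ⟨hvec σ p ((σ ^ nn σ T β) β) β, subset_cone' (Or.inl ⟨_, β,
      notMem_of_tilde' σ T hs.2, Or.inl hβ, sameOrbit_pow' σ _ _, rfl⟩), ?_⟩
    rw [iT_hvec', res_fH' σ p T hβ, steps_eq' σ hs.1 rfl]
    intro k hk hk' heq
    exact hs.2 (heq ▸ nn_min' σ T hk hk')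
  · have hs := nn_spec' σ T ho
    have hσ := tilde_succ' σ T hβ hβ'
    have hn2 : nn σ T β ≠ 1 := by
      intro h1
      have := hs.2
      rw [h1] at this
      exact this (Or.inl (by simpa using hσ))
    obtain ⟨m, hm⟩ : ∃ m, nn σ T β = m + 1 := ⟨nn σ T β - 1, by omega⟩
    have hstep : steps σ (σ β) ((σ ^ nn σ T β) β) = m := by
      apply steps_eq' σ (by omega)
      · rw [hm, pow_succ, Equiv.Perm.mul_apply]
      · intro k hk hk' heq
        apply hs.2
        rw [← heq, ← Equiv.Perm.mul_apply, ← pow_succ]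
        exact nn_min' σ T (by omega) (by omega)
    have hso : sameOrbit σ ((σ ^ nn σ T β) β) (σ β) := by
      obtain ⟨k, hk⟩ := sameOrbit_pow' σ β (nn σ T β)
      exact ⟨k + 1, by rw [pow_succ', Equiv.Perm.mul_apply, hk]⟩
    refine ⟨hvec σ p ((σ ^ nn σ T β) β) (σ β), subset_cone' (Or.inl ⟨_, σ β,
      notMem_of_tilde' σ T hs.2, Or.inr ⟨β, ⟨hβ, hβ'⟩, rfl⟩, hso, rfl⟩), ?_⟩
    rw [iT_hvec', res_fB' σ p T hβ' ho, hstep, iT_succ' σ p T hβ hβ']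
    have : (p : ℚ) ^ nn σ T β = p ^ m * p := by rw [hm, pow_succ]
    rw [this]
    module
  · have hβ := ho (mem_orbit_self' σ β)
    have hso : sameOrbit σ β (σ β) := ⟨1, by simp⟩
    have hc : (1 + (p : ℚ) ^ (steps σ (σ β) β + 1)) ≠ 0 := by positivity
    refine ⟨(1 + (p : ℚ) ^ (steps σ (σ β) β + 1))⁻¹ • hvec σ p β (σ β),
      cone_smul' (by positivity) (subset_cone' (Or.inl ⟨β, σ β, hβ',
        Or.inr ⟨β, ⟨hβ, hβ'⟩, rfl⟩, hso, rfl⟩)), ?_⟩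
    rw [iT_smul', iT_hvec', iT_succ' σ p T hβ hβ']
    have : - iT σ p T (e β) + ((p : ℚ) ^ steps σ (σ β) β) • (-(p : ℚ)) • iT σ p T (e β)
      = (1 + (p : ℚ) ^ (steps σ (σ β) β + 1)) • (- iT σ p T (e β)) := by
      rw [pow_succ]
      module
    rw [this, smul_smul, inv_mul_cancel₀ hc, one_smul, iT_e_notMem' σ p T hβ']
    rfl

end main

end GO

/-- `i_T(𝒟_T) ⊆ ℚ^{𝔹−T}` equals the `ℚ^{≥0}`-cone generated by
`⋃_𝔭 𝒢^{T-red}(T_𝔭)`. -/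
theorem statement7 {B : Type*} [Fintype B] [DecidableEq B] [Nonempty B]
    (σ : Equiv.Perm B) (p : ℕ) (hp : p.Prime) (T : Set B) :
    GO.iT σ p T '' GO.D σ p T = GO.cone (GO.Gred σ p T) := by
  apply Set.Subset.antisymm
  · rintro _ ⟨x, hx, rfl⟩
    refine GO.cone_le' (K := {x | GO.iT σ p T x ∈ GO.cone (GO.Gred σ p T)}) ?_ ?_ ?_ ?_ hx
    · have := GO.iT_smul' σ p T 0 0
      simp only [zero_smul] at this
      simp only [Set.mem_ofPred_eq, this]
      exact GO.cone_zero'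
    · intro x hx y hy
      simp only [Set.mem_ofPred_eq, GO.iT_add'] at *
      exact GO.cone_add' hx hy
    · intro a ha x hx
      simp only [Set.mem_ofPred_eq, GO.iT_smul'] at *
      exact GO.cone_smul' ha hx
    · intro v hv
      exact GO.gen_fwd σ p T hp hv
  · refine GO.cone_le' ?_ ?_ ?_ ?_
    · refine ⟨0, GO.cone_zero', ?_⟩
      have := GO.iT_smul' σ p T 0 0
      simpa only [zero_smul] using this
    · rintro _ ⟨x, hx, rfl⟩ _ ⟨y, hy, rfl⟩
      exact ⟨x + y, GO.cone_add' hx hy, GO.iT_add' σ p T x y⟩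
    · rintro a ha _ ⟨x, hx, rfl⟩
      exact ⟨a • x, GO.cone_smul' ha hx, GO.iT_smul' σ p T a x⟩
    · intro g hg
      exact GO.gen_bwd σ p T hp hg
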